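/- Let G = F₁ *_{a=b} F₂ with F₁, F₂ free, a, b not proper powers, and let u ∈ F₁ \ ⟨a⟩ and v ∈ F₂ \ ⟨b⟩. If u is conjugate in G to neither v nor v⁻¹, then there exists a homomorphism of G onto a finite group under which the images of u and v have different orders. -/

import Mathlib

open Monoid Subgroup




def fam (α β : Type) : Bool → Type
  | true => FreeGroup α
  | false => FreeGroup β

instance famGroup (α β : Type) : ∀ i : Bool, Group (fam α β i)
  | true => inferInstanceAs (Group (FreeGroup α))
  | false => inferInstanceAs (Group (FreeGroup β))

/-- The maps from the infinite cyclic group `FreeGroup Unit` sending the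
generator to `a` resp. `b`; their pushout is `F₁ *_{a=b} F₂`. -/
def amalMaps {α β : Type} (a : FreeGroup α) (b : FreeGroup β) :
    ∀ i : Bool, FreeGroup Unit →* fam α β i
  | true => FreeGroup.lift fun _ => a
  | false => FreeGroup.lift fun _ => b

/-- An element is not a proper power: `a = w ^ k` forces `|k| ≤ 1`. -/
def NotProperPower {G : Type} [Group G] (a : G) : Prop :=
  ∀ (w : G) (k : ℤ), a = w ^ k → k.natAbs ≤ 1


/-- bi-infinite periodic reduced word spelling the powers of `w`. -/
structure Axis {α : Type} (w : FreeGroup α) where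
  ℓ : ℕ
  pos : 0 < ℓ
  U : ℤ → α × Bool
  V : ℤ → FreeGroup α
  V0 : V 0 = 1
  Vs : ∀ i, V (i + 1) = V i * FreeGroup.mk [U i]
  per : ∀ i, U (i + ℓ) = U i
  red : ∀ i, U (i + 1) ≠ ((U i).1, !(U i).2)
  Vl : V ℓ = w

theorem exists_partial_products {G : Type} [Group G] (g : ℤ → G) :
    ∃ V : ℤ → G, V 0 = 1 ∧ ∀ i, V (i + 1) = V i * g i := by
  let P : ℕ → G := fun n => Nat.rec 1 (fun k x => x * g k) n
  let N : ℕ → G := fun n => Nat.rec 1 (fun k x => x * (g (-(k : ℤ) - 1))⁻¹) n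
  refine ⟨fun i => if 0 ≤ i then P i.toNat else N (-i).toNat, by simp [P], ?_⟩
  intro i
  rcases lt_trichotomy i (-1) with h | h | h
  · obtain ⟨k, rfl⟩ : ∃ k : ℕ, i = -(k : ℤ) - 1 - 1 := ⟨(-i-2).toNat, by omega⟩
    have h1 : ¬ (0 ≤ -(k : ℤ) - 1 - 1 + 1) := by omega
    have h2 : ¬ (0 ≤ -(k : ℤ) - 1 - 1) := by omega
    have h3 : (-(-(k : ℤ) - 1 - 1 + 1)).toNat = k + 1 := by omega
    have h4 : (-(-(k : ℤ) - 1 - 1)).toNat = k + 1 + 1 := by omega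
    simp only [h1, h2, if_false, h3, h4]
    have : N (k + 1 + 1) = N (k + 1) * (g (-((k + 1 : ℕ) : ℤ) - 1))⁻¹ := rfl
    rw [this]
    have h5 : (-((k + 1 : ℕ) : ℤ) - 1) = -(k : ℤ) - 1 - 1 := by push_cast; ring
    rw [h5]; simp
  · subst h
    have : N 1 = 1 * (g (-((0 : ℕ) : ℤ) - 1))⁻¹ := rfl
    simp [P, this]
  · obtain ⟨k, rfl⟩ : ∃ k : ℕ, i = (k : ℤ) := ⟨i.toNat, by omega⟩
    have h1 : (0 : ℤ) ≤ (k : ℤ) + 1 := by omega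
    have h2 : (0 : ℤ) ≤ (k : ℤ) := by omega
    have h3 : ((k : ℤ) + 1).toNat = k + 1 := by omega
    simp only [h1, h2, if_true, h3, Int.toNat_natCast]
    rfl

theorem exists_axis {α : Type} (w : FreeGroup α) (hw : w ≠ 1) :
    ∃ g : FreeGroup α, Nonempty (Axis (g * w * g⁻¹)) := by
  classical
  have hc := FreeGroup.reduceCyclically.isCyclicallyReduced (FreeGroup.isReduced_toWord (x := w))
  have hconj := FreeGroup.reduceCyclically.conj_conjugator_reduceCyclically w.toWord
  set L := FreeGroup.reduceCyclically w.toWord with hL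
  set C := FreeGroup.reduceCyclically.conjugator w.toWord with hC
  have hw2 : w = FreeGroup.mk C * FreeGroup.mk L * (FreeGroup.mk C)⁻¹ := by
    conv_lhs => rw [← FreeGroup.mk_toWord (x := w), ← hconj]
    rw [FreeGroup.inv_mk, FreeGroup.mul_mk, FreeGroup.mul_mk]
  have hLne : L ≠ [] := by
    intro h
    apply hw
    rw [hw2, h]
    change FreeGroup.mk C * 1 * _ = 1
    rw [mul_one, mul_inv_cancel]
  have hpos : 0 < L.length := List.length_pos_iff.mpr hLne
  have hlt : ∀ i : ℤ, (i % (L.length : ℤ)).toNat < L.length := by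
    intro i
    have h1 := Int.emod_nonneg i (b := (L.length : ℤ)) (by omega)
    have h2 := Int.emod_lt_of_pos i (b := (L.length : ℤ)) (by omega)
    omega
  let U : ℤ → α × Bool := fun i => L[(i % (L.length : ℤ)).toNat]'(hlt i)
  obtain ⟨V, V0, Vs⟩ := exists_partial_products (fun i => FreeGroup.mk [U i])
  have hUn : ∀ n : ℕ, ∀ h : n < L.length, U n = L[n] := by
    intro n h
    have : ((n : ℤ) % (L.length : ℤ)).toNat = n := by
      rw [Int.emod_eq_of_lt (by omega) (by omega)]; simp
    simp only [U, this]
  have hV : ∀ n : ℕ, n ≤ L.length → V n = FreeGroup.mk (L.take n) := by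
    intro n
    induction n with
    | zero => intro _; simpa using (V0.trans FreeGroup.one_eq_mk)
    | succ n ih =>
      intro h
      push_cast
      rw [Vs, ih (by omega), FreeGroup.mul_mk, hUn n (by omega), List.take_concat_get']
  have hg : (FreeGroup.mk C)⁻¹ * w * (FreeGroup.mk C)⁻¹⁻¹ = FreeGroup.mk L := by
    rw [hw2]; group
  refine ⟨(FreeGroup.mk C)⁻¹, ⟨?_⟩⟩
  rw [hg]
  refine ⟨L.length, hpos, U, V, V0, Vs, ?_, ?_, ?_⟩
  · intro i
    simp [U]
  · intro i
    have key : ∀ x y : α × Bool, (x.1 = y.1 → x.2 = y.2) → y ≠ (x.1, !x.2) := by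
      rintro ⟨x, b⟩ ⟨y, c⟩ h h2
      simp only [Prod.mk.injEq] at h2 h
      obtain ⟨rfl, rfl⟩ := h2
      have := h rfl
      cases b <;> simp at this
    apply key
    have hi := hlt i
    have e : ((i+1) % (L.length : ℤ)).toNat = if (i % (L.length : ℤ)).toNat + 1 = L.length then 0 else (i % (L.length : ℤ)).toNat + 1 := by
      have h1 := Int.emod_nonneg i (b := (L.length : ℤ)) (by omega)
      rw [← Int.emod_add_emod]
      split_ifs with h
      · have : i % (L.length : ℤ) + 1 = L.length := by omega
        rw [this]; simp
      · rw [Int.emod_eq_of_lt (by omega) (by omega)]; omega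
    simp only [U, e]
    split_ifs with h
    · refine hc.2 _ ?_ _ ?_
      · rw [List.getLast?_eq_getElem?]
        have : L.length - 1 = (i % (L.length : ℤ)).toNat := by omega
        rw [this]; simp
      · rw [List.head?_eq_getElem?]; simp
    · have := (List.isChain_iff_getElem.mp hc.1) (i % (L.length : ℤ)).toNat (by omega)
      exact this
  · rw [hV _ le_rfl]; simp


namespace Axis
variable {α : Type} {w : FreeGroup α} (A : Axis w)

theorem V_add (i : ℤ) : A.V (i + A.ℓ) = w * A.V i := by
  induction i using Int.induction_on with
  | zero => simp [A.V0, A.Vl]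
  | succ i ih =>
    rw [A.Vs, add_right_comm, A.Vs, ih, A.per, mul_assoc]
  | pred i ih =>
    have h1 := A.Vs (-(i : ℤ) - 1)
    have h2 := A.Vs (-(i : ℤ) - 1 + A.ℓ)
    rw [A.per, add_right_comm] at h2
    simp only [sub_add_cancel] at h1 h2
    rw [h2, h1, ← mul_assoc] at ih
    exact mul_right_cancel ih

theorem V_add_mul (i k : ℤ) : A.V (i + k * A.ℓ) = w ^ k * A.V i := by
  induction k using Int.induction_on with
  | zero => simp
  | succ k ih =>
    rw [add_mul, one_mul, ← add_assoc, V_add, ih, zpow_add_one, ← mul_assoc,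
      (Commute.refl w).zpow_right k |>.eq]
  | pred k ih =>
    have h := A.V_add (i + (-(k : ℤ) - 1) * A.ℓ)
    have e : i + (-(k : ℤ) - 1) * A.ℓ + A.ℓ = i + (-(k : ℤ)) * A.ℓ := by ring
    rw [e, ih] at h
    rw [zpow_sub_one, ← inv_mul_eq_iff_eq_mul.mpr h, ← mul_assoc]
    congr 1
    exact ((Commute.refl w).zpow_right _).inv_left.eq

theorem U_add_mul (i k : ℤ) : A.U (i + k * A.ℓ) = A.U i := by
  induction k using Int.induction_on with
  | zero => simp
  | succ k ih => rw [add_mul, one_mul, ← add_assoc, A.per, ih]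
  | pred k ih =>
    rw [← ih, ← A.per]; congr 1; ring

theorem U_congr {i j : ℤ} (h : (A.ℓ : ℤ) ∣ i - j) : A.U i = A.U j := by
  obtain ⟨k, hk⟩ := h
  have : i = j + k * A.ℓ := by linarith
  rw [this, U_add_mul]

theorem V_congr {i j : ℤ} (h : (A.ℓ : ℤ) ∣ i - j) : ∃ k : ℤ, i - j = A.ℓ * k ∧ A.V i = w ^ k * A.V j := by
  obtain ⟨k, hk⟩ := h
  have : i = j + k * A.ℓ := by linarith
  exact ⟨k, hk, by rw [this, V_add_mul]⟩

theorem mk_inv (y : α × Bool) : (FreeGroup.mk [y])⁻¹ = FreeGroup.mk [(y.1, !y.2)] := by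
  simp [FreeGroup.inv_mk, FreeGroup.invRev]

/-- the axis of the inverse -/
def rev : Axis w⁻¹ where
  ℓ := A.ℓ
  pos := A.pos
  U i := ((A.U (-i - 1)).1, !(A.U (-i-1)).2)
  V i := A.V (-i)
  V0 := by simp [A.V0]
  Vs i := by
    have := A.Vs (-i - 1)
    rw [sub_add_cancel] at this
    rw [this, mul_assoc, ← mk_inv, mul_inv_cancel, mul_one]; congr 1; ring
  per i := by
    have := A.per (-(i + A.ℓ) - 1)
    have e : (-(i + (A.ℓ : ℤ)) - 1) + A.ℓ = -i - 1 := by ring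
    rw [e] at this
    rw [this]
  red i := by
    have := A.red (-(i+1) - 1)
    have e : -(i + 1) - 1 + 1 = -i - 1 := by ring
    rw [e] at this
    intro h
    apply this
    simp only [Prod.mk.injEq, Bool.not_not] at h
    ext
    · exact h.1.symm
    · simp only []; rw [h.2]
  Vl := by
    have := A.V_add_mul 0 (-1)
    simpa [A.V0] using this
end Axis

theorem exists_perm_extend {X : Type} [Finite X] (R : X → X → Prop)
    (h1 : ∀ a b c, R a b → R a c → b = c) (h2 : ∀ a b c, R a c → R b c → a = b) :
    ∃ p : Equiv.Perm X, ∀ a b, R a b → p a = b := by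
  classical
  have := Fintype.ofFinite X
  let e : {a // ∃ b, R a b} ≃ {b // ∃ a, R a b} :=
    { toFun := fun a => ⟨a.2.choose, a.1, a.2.choose_spec⟩
      invFun := fun b => ⟨b.2.choose, b.1, b.2.choose_spec⟩
      left_inv := by
        rintro ⟨a, ha⟩
        ext
        exact h2 _ _ _ (Exists.choose_spec (⟨a, ha.choose_spec⟩ : ∃ a', R a' ha.choose)) ha.choose_spec
      right_inv := by
        rintro ⟨b, hb⟩
        ext
        exact h1 _ _ _ (Exists.choose_spec (⟨b, hb.choose_spec⟩ : ∃ b', R hb.choose b')) hb.choose_spec }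
  refine ⟨e.extendSubtype, fun a b hab => ?_⟩
  rw [Equiv.extendSubtype_apply_of_mem e a ⟨b, hab⟩]
  exact h1 _ _ _ (Exists.choose_spec (⟨b, hab⟩ : ∃ b', R a b')) hab

namespace Axis
variable {α : Type} {w : FreeGroup α} (A : Axis w)

theorem exists_sep : ∃ (Q : Type) (_ : Group Q) (_ : Finite Q) (π : FreeGroup α →* Q),
    ∀ i j, π (A.V i) = π (A.V j) → (A.ℓ : ℤ) ∣ i - j := by
  classical
  have : NeZero A.ℓ := ⟨A.pos.ne'⟩
  have cast : ∀ i j : ℤ, (i : ZMod A.ℓ) = j → (A.ℓ : ℤ) ∣ i - j := by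
    intro i j h
    have := (ZMod.intCast_eq_intCast_iff_dvd_sub j i A.ℓ).mp h.symm
    exact this
  let R : α → ZMod A.ℓ → ZMod A.ℓ → Prop := fun x a b => ∃ i : ℤ,
    (A.U i = (x, true) ∧ a = i ∧ b = i + 1) ∨ (A.U i = (x, false) ∧ a = i + 1 ∧ b = i)
  have bad : ∀ i j : ℤ, ∀ x, ∀ b : Bool, A.U i = (x, b) → A.U j = (x, !b) → (i : ZMod A.ℓ) = j + 1 → False := by
    intro i j x b hi hj h
    have h' : (i : ZMod A.ℓ) = ((j + 1 : ℤ) : ZMod A.ℓ) := by push_cast; exact h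
    apply A.red j
    rw [← A.U_congr (cast _ _ h'), hi, hj]; simp
  have h1 : ∀ x a b c, R x a b → R x a c → b = c := by
    rintro x a b c ⟨i, hi⟩ ⟨j, hj⟩
    rcases hi with ⟨hU, rfl, rfl⟩ | ⟨hU, rfl, rfl⟩ <;> rcases hj with ⟨hU', h, rfl⟩ | ⟨hU', h, rfl⟩
    · rw [h]
    · exact (bad i j x true hU hU' h).elim
    · exact (bad j i x true hU' hU h.symm).elim
    · exact add_right_cancel h
  have h2 : ∀ x a b c, R x a c → R x b c → a = b := by
    rintro x a b c ⟨i, hi⟩ ⟨j, hj⟩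
    rcases hi with ⟨hU, rfl, rfl⟩ | ⟨hU, rfl, rfl⟩ <;> rcases hj with ⟨hU', rfl, h⟩ | ⟨hU', rfl, h⟩
    · exact add_right_cancel h
    · exact (bad j i x false hU' hU h.symm).elim
    · exact (bad i j x false hU hU' h).elim
    · rw [h]
  choose p hp using fun x => exists_perm_extend (R x) (h1 x) (h2 x)
  let σ : FreeGroup α →* (Equiv.Perm (ZMod A.ℓ))ᵐᵒᵖ := FreeGroup.lift fun x => MulOpposite.op (p x)
  refine ⟨_, inferInstance, Finite.of_equiv _ MulOpposite.opEquiv, σ, ?_⟩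
  have key : ∀ i : ℤ, (σ (FreeGroup.mk [A.U i])).unop (i : ZMod A.ℓ) = i + 1 := by
    intro i
    rcases hU : A.U i with ⟨x, b⟩
    cases b
    · have : FreeGroup.mk [(x, false)] = (FreeGroup.of x)⁻¹ := by
        rw [FreeGroup.of, mk_inv]; rfl
      rw [this, map_inv]
      simp only [σ, FreeGroup.lift_apply_of, MulOpposite.unop_inv, MulOpposite.unop_op]
      rw [Equiv.Perm.inv_eq_iff_eq]
      exact (hp x _ _ ⟨i, Or.inr ⟨hU, rfl, rfl⟩⟩).symm
    · change (σ (FreeGroup.of x)).unop _ = _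
      simp only [σ, FreeGroup.lift_apply_of, MulOpposite.unop_op]
      exact hp x _ _ ⟨i, Or.inl ⟨hU, rfl, rfl⟩⟩
  have key2 : ∀ i : ℤ, (σ (A.V i)).unop 0 = i := by
    intro i
    induction i using Int.induction_on with
    | zero => simp [A.V0]
    | succ i ih =>
      rw [A.Vs, map_mul, MulOpposite.unop_mul, Equiv.Perm.mul_apply, ih, key]; push_cast; rfl
    | pred i ih =>
      have h := A.Vs (-(i : ℤ) - 1)
      rw [sub_add_cancel] at h
      rw [h, map_mul, MulOpposite.unop_mul, Equiv.Perm.mul_apply] at ih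
      apply (σ (FreeGroup.mk [A.U (-(i : ℤ) - 1)])).unop.injective
      rw [ih, key]; push_cast; ring
  intro i j h
  apply cast
  rw [← key2 i, ← key2 j, h]

/-- The quotient `π` separates the vertices of the axis. -/
def Sep {Q : Type} [Group Q] (π : FreeGroup α →* Q) : Prop :=
  ∀ i j, π (A.V i) = π (A.V j) → ((A.ℓ * orderOf (π w) : ℕ) : ℤ) ∣ i - j

theorem sep_of {Q : Type} [Group Q] (π : FreeGroup α →* Q)
    (h : ∀ i j, π (A.V i) = π (A.V j) → (A.ℓ : ℤ) ∣ i - j) : A.Sep π := by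
  intro i j hij
  obtain ⟨k, hk, hV⟩ := A.V_congr (h i j hij)
  rw [hV, map_mul, map_zpow] at hij
  have : π w ^ k = 1 := by simpa using hij
  rw [hk]
  push_cast
  exact mul_dvd_mul_left _ (orderOf_dvd_iff_zpow_eq_one.mpr this)

theorem Sep.dvd {A : Axis w} {Q : Type} [Group Q] {π : FreeGroup α →* Q} (h : A.Sep π) {i j : ℤ}
    (hij : π (A.V i) = π (A.V j)) : (A.ℓ : ℤ) ∣ i - j :=
  (Dvd.intro _ (by push_cast; rfl)).trans (h i j hij)

theorem Sep.U_eq {A : Axis w} {Q : Type} [Group Q] {π : FreeGroup α →* Q} (h : A.Sep π) {i j : ℤ}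
    (hij : π (A.V i) = π (A.V j)) : A.U i = A.U j := A.U_congr (h.dvd hij)

theorem Sep.rev {A : Axis w} {Q : Type} [Group Q] {π : FreeGroup α →* Q} (h : A.Sep π) :
    A.rev.Sep π := by
  apply sep_of
  intro i j hij
  have := h.dvd hij
  change (A.ℓ : ℤ) ∣ _
  obtain ⟨k, hk⟩ := this
  exact ⟨-k, by linarith⟩
end Axis

theorem exists_sep_two {α : Type} {u a : FreeGroup α} (A : Axis u) (B : Axis a) :
    ∃ (Q : Type) (_ : Group Q) (_ : Finite Q) (π : FreeGroup α →* Q), A.Sep π ∧ B.Sep π := by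
  obtain ⟨Q, _, _, π, h⟩ := A.exists_sep
  obtain ⟨Q', _, _, π', h'⟩ := B.exists_sep
  refine ⟨Q × Q', inferInstance, inferInstance, π.prod π', A.sep_of _ ?_, B.sep_of _ ?_⟩
  · intro i j hij
    exact h i j (congrArg Prod.fst hij)
  · intro i j hij
    exact h' i j (congrArg Prod.snd hij)


section wreath
variable {α : Type} {Q : Type} [Group Q] (π : FreeGroup α →* Q)

/-- edge of the Cayley graph of `Q` traversed by the letter `y` from `q` -/
def edge (q : Q) (y : α × Bool) : Q × α :=
  if y.2 then (q, y.1) else (q * π (FreeGroup.mk [y]), y.1)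

def sgn (y : α × Bool) : ℤ := if y.2 then 1 else -1

def genPerm {K : Type} (D : Q × α → Equiv.Perm K) (x : α) : Equiv.Perm (Q × K) where
  toFun z := (z.1 * π (FreeGroup.of x), D (z.1, x) z.2)
  invFun z := (z.1 * (π (FreeGroup.of x))⁻¹, (D (z.1 * (π (FreeGroup.of x))⁻¹, x)).symm z.2)
  left_inv z := by simp
  right_inv z := by simp

def wr {K : Type} (D : Q × α → Equiv.Perm K) : FreeGroup α →* (Equiv.Perm (Q × K))ᵐᵒᵖ :=
  FreeGroup.lift fun x => MulOpposite.op (genPerm π D x)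

theorem wr_step {K : Type} (D : Q × α → Equiv.Perm K) (y : α × Bool) (q : Q) (t : K) :
    (wr π D (FreeGroup.mk [y])).unop (q, t) =
      (q * π (FreeGroup.mk [y]), (D (edge π q y) ^ sgn y) t) := by
  rcases y with ⟨x, b⟩
  cases b
  · have : FreeGroup.mk [(x, false)] = (FreeGroup.of x)⁻¹ := by
      rw [FreeGroup.of, Axis.mk_inv]; rfl
    simp only [edge, sgn, this]
    rw [map_inv, map_inv]
    simp only [wr, FreeGroup.lift_apply_of, MulOpposite.unop_inv, MulOpposite.unop_op]
    rw [Equiv.Perm.inv_eq_iff_eq]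
    simp [genPerm]
  · change (wr π D (FreeGroup.of x)).unop _ = (q * π (FreeGroup.of x), _)
    simp [wr, genPerm, edge, sgn]

theorem wr_mul {K : Type} (D : Q × α → Equiv.Perm K) (g h : FreeGroup α) (z : Q × K) :
    (wr π D (g * h)).unop z = (wr π D h).unop ((wr π D g).unop z) := by
  rw [map_mul, MulOpposite.unop_mul, Equiv.Perm.mul_apply]

theorem wr_fst {K : Type} (D : Q × α → Equiv.Perm K) (g : FreeGroup α) :
    ∀ z, ((wr π D g).unop z).1 = z.1 * π g := by
  induction g using FreeGroup.induction_on with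
  | C1 => intro z; simp
  | of x => intro z; simp [wr, genPerm]
  | inv_of x _ => 
    intro z; 
    have := wr_step π D (x, false) z.1 z.2
    have e : FreeGroup.mk [(x, false)] = (FreeGroup.of x)⁻¹ := by
      rw [FreeGroup.of, Axis.mk_inv]; rfl
    rw [e] at this
    rw [show z = (z.1, z.2) from rfl, this]
  | mul x y hx hy =>
    intro z
    rw [wr_mul, hy, hx, map_mul, mul_assoc]

end wreath

namespace Axis
variable {α : Type} {w : FreeGroup α} (A : Axis w) {Q : Type} [Group Q] (π : FreeGroup α →* Q)

/-- the edges of the elevation at `q` -/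
def e (q : Q) (i : ℤ) : Q × α := edge π (q * π (A.V i)) (A.U i)

theorem wr_V_succ {K : Type} (D : Q × α → Equiv.Perm K) (q : Q) (t t' : K) (i : ℤ)
    (h : (wr π D (A.V i)).unop (q, t) = (q * π (A.V i), t')) :
    (wr π D (A.V (i + 1))).unop (q, t) =
      (q * π (A.V (i + 1)), (D (A.e π q i) ^ sgn (A.U i)) t') := by
  rw [A.Vs, wr_mul, h, wr_step, map_mul, mul_assoc]; rfl

theorem e_eq {w' : FreeGroup α} (B : Axis w') {q q' : Q} {i j : ℤ}
    (h : A.e π q i = B.e π q' j) :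
    (A.U i = B.U j ∧ q * π (A.V i) = q' * π (B.V j)) ∨
    (A.U i = ((B.U j).1, !(B.U j).2) ∧ q * π (A.V i) = q' * π (B.V (j + 1)) ∧
      q * π (A.V (i + 1)) = q' * π (B.V j)) := by
  rw [A.Vs, B.Vs, map_mul, map_mul, ← mul_assoc, ← mul_assoc]
  unfold e edge at h
  rcases hA : A.U i with ⟨x, b⟩
  rcases hB : B.U j with ⟨y, c⟩
  rw [hA, hB] at h
  cases b <;> cases c <;> simp only [Prod.mk.injEq, if_true, Bool.false_eq_true, if_false] at h <;>
    obtain ⟨h, rfl⟩ := h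
  · left; exact ⟨rfl, mul_right_cancel h⟩
  · right
    refine ⟨rfl, ?_, h⟩
    rw [← h, mul_assoc, ← map_mul]
    have : FreeGroup.mk [(x, true)] = (FreeGroup.mk [(x, false)])⁻¹ := by rw [mk_inv]; rfl
    rw [this, mul_inv_cancel]; simp
  · right
    refine ⟨rfl, h, ?_⟩
    rw [h, mul_assoc, ← map_mul]
    have : FreeGroup.mk [(x, true)] = (FreeGroup.mk [(x, false)])⁻¹ := by rw [mk_inv]; rfl
    rw [this, mul_inv_cancel]; simp
  · left; exact ⟨rfl, h⟩

variable {A π}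
theorem Sep.e_inj (h : A.Sep π) {q : Q} {i j : ℤ} (hij : A.e π q i = A.e π q j) :
    ((A.ℓ * orderOf (π w) : ℕ) : ℤ) ∣ i - j := by
  rcases A.e_eq π A hij with ⟨_, h2⟩ | ⟨h1, h2, _⟩
  · exact h _ _ (mul_left_cancel h2)
  · exfalso
    apply A.red j
    rw [← h1, h.U_eq (mul_left_cancel h2)]

theorem e_per (q : Q) {i j : ℤ} (h : ((A.ℓ * orderOf (π w) : ℕ) : ℤ) ∣ i - j) :
    A.e π q i = A.e π q j := by
  have h1 : (A.ℓ : ℤ) ∣ i - j := (Dvd.intro _ (by push_cast; rfl)).trans h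
  unfold e
  rw [A.U_congr h1]
  obtain ⟨k, hk, hV⟩ := A.V_congr h1
  obtain ⟨m, hm⟩ := h
  have hp := A.pos
  have : k = orderOf (π w) * m := by
    have : (A.ℓ : ℤ) * k = A.ℓ * (orderOf (π w) * m) := by
      rw [← hk, hm]; push_cast; ring
    exact mul_left_cancel₀ (by omega) this
  rw [hV, this, map_mul, map_zpow, zpow_mul]
  simp

theorem follow_aux {a : FreeGroup α} (B : Axis a) (hA : A.Sep π) (q : Q)
    (h : ∀ i, ∃ j, B.e π q i = A.e π 1 j) (j : ℤ)
    (h0 : B.U 0 = A.U j) (h1 : q * π (B.V 0) = π (A.V j)) :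
    ∃ g, Commute a (g * w * g⁻¹) := by
  have key : ∀ n : ℕ, B.U n = A.U (j + n) ∧ q * π (B.V n) = π (A.V (j + n)) := by
    intro n
    induction n with
    | zero => simpa using ⟨h0, h1⟩
    | succ n ih =>
      obtain ⟨ih1, ih2⟩ := ih
      have h3 : q * π (B.V (n + 1)) = π (A.V (j + n + 1)) := by
        rw [B.Vs, A.Vs, map_mul, map_mul, ← mul_assoc, ih1, ih2]
      push_cast
      rw [← add_assoc]
      refine ⟨?_, h3⟩
      obtain ⟨k, hk⟩ := h (n + 1)
      rcases B.e_eq π A hk with ⟨e1, e2⟩ | ⟨e1, e2, _⟩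
      · rw [one_mul, h3] at e2
        rw [e1, hA.U_eq e2]
      · exfalso
        rw [one_mul, h3] at e2
        have e3 : A.U (j + n) = A.U k := by
          apply A.U_congr
          have := hA.dvd e2
          convert this using 1; ring
        apply B.red n
        rw [e1, ih1, e3]
  have key2 : ∀ n : ℕ, B.V n = (A.V j)⁻¹ * A.V (j + n) := by
    intro n
    induction n with
    | zero => simp [B.V0]
    | succ n ih =>
      push_cast
      rw [B.Vs, ← add_assoc, A.Vs, ih, (key n).1, mul_assoc]
  refine ⟨(A.V j)⁻¹, ?_⟩
  have hz : (A.V j)⁻¹ * w * (A.V j)⁻¹⁻¹ = B.V A.ℓ := by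
    rw [key2, A.V_add, inv_inv, mul_assoc]
  have h2 := B.V_add A.ℓ
  have h3 := key2 (A.ℓ + B.ℓ)
  have h4 := key2 B.ℓ
  have h5 := A.V_add (j + B.ℓ)
  rw [B.Vl] at h4
  unfold Commute SemiconjBy
  rw [hz, ← h2]
  rw [← hz]
  push_cast at h3
  rw [h3, show j + ((A.ℓ : ℤ) + B.ℓ) = j + B.ℓ + A.ℓ by ring, h5]
  refine Eq.trans ?_ (congrArg (fun t => (A.V j)⁻¹ * w * (A.V j)⁻¹⁻¹ * t) h4.symm)
  group

theorem follow {a : FreeGroup α} (B : Axis a) (hA : A.Sep π) (q : Q)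
    (h : ∀ i, ∃ j, B.e π q i = A.e π 1 j) : ∃ g, Commute a (g * w * g⁻¹) := by
  obtain ⟨j, hj⟩ := h 0
  rcases B.e_eq π A hj with ⟨e1, e2⟩ | ⟨e1, e2, _⟩
  · rw [one_mul] at e2
    exact follow_aux B hA q h j e1 e2
  · rw [one_mul] at e2
    have hrev : ∀ k, A.e π 1 k = A.rev.e π 1 (-k - 1) := by
      intro k
      have hU : A.rev.U (-k - 1) = ((A.U k).1, !(A.U k).2) := by
        simp [rev]
      have hV : A.rev.V (-k - 1) = A.V (k + 1) := by
        simp only [rev]; congr 1; ring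
      unfold e edge
      rw [hU, hV, A.Vs]
      rcases A.U k with ⟨x, b⟩
      have : FreeGroup.mk [(x, true)] = (FreeGroup.mk [(x, false)])⁻¹ := by rw [mk_inv]; rfl
      cases b
      · simp
      · have e : π (FreeGroup.mk [(x, true)]) * π (FreeGroup.mk [(x, false)]) = 1 := by
          rw [this, ← map_mul, inv_mul_cancel, map_one]
        simp [mul_assoc, e]
    obtain ⟨g, hg⟩ := follow_aux (A := A.rev) B hA.rev q
      (by intro i; obtain ⟨k, hk⟩ := h i; exact ⟨-k - 1, by rw [hk, hrev]⟩) (-j - 1)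
      (by rw [e1]; simp [rev]) (by rw [e2]; simp only [rev]; congr 2; ring)
    refine ⟨g, ?_⟩
    have := hg.inv_right
    rwa [show (g * w⁻¹ * g⁻¹)⁻¹ = g * w * g⁻¹ by group] at this
end Axis


/-- affine permutations -/
def aff {R : Type} [CommRing R] (c : Rˣ) (f : R) : Equiv.Perm R where
  toFun t := c * t + f
  invFun t := (c⁻¹ : Rˣ) * (t - f)
  left_inv t := by simp
  right_inv t := by simp

theorem aff_apply {R : Type} [CommRing R] (c : Rˣ) (f t : R) : aff c f t = c * t + f := rfl

theorem aff_sgn {R α : Type} [CommRing R] (c : Rˣ) (f : R) (y : α × Bool) :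
    ∃ d, ∀ t, (aff c f ^ sgn y) t = (c ^ sgn y : Rˣ) * t + d := by
  unfold sgn
  split_ifs with h
  · exact ⟨f, fun t => by simp [aff_apply]⟩
  · refine ⟨(c⁻¹ : Rˣ) * (-f), fun t => ?_⟩
    rw [zpow_neg_one, zpow_neg_one, Equiv.Perm.inv_eq_iff_eq, aff_apply]
    rw [← mul_add, ← mul_assoc]; simp

theorem aff_one_sgn {R α : Type} [CommRing R] (f t : R) (y : α × Bool) :
    (aff 1 f ^ sgn y) t = t + (sgn y : ℤ) * f := by
  unfold sgn
  split_ifs with h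
  · simp [aff_apply]
  · rw [zpow_neg_one, Equiv.Perm.inv_eq_iff_eq, aff_apply]
    simp

theorem exists_order {p M : ℕ} [Fact p.Prime] (hM : 0 < M) (h : p ≡ 1 [MOD M]) :
    ∃ ζ : (ZMod p)ˣ, orderOf ζ = M := by
  obtain ⟨g, hg⟩ := IsCyclic.exists_generator (α := (ZMod p)ˣ)
  have h1 : orderOf g = p - 1 := by
    rw [orderOf_eq_card_of_forall_mem_zpowers hg, Nat.card_eq_fintype_card, ZMod.card_units]
  have hp := (Fact.out : p.Prime).two_le
  have h2 : M ∣ p - 1 := (Nat.modEq_iff_dvd' (by omega)).mp h.symm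
  refine ⟨g ^ (orderOf g / M), ?_⟩
  rw [← h1] at h2
  exact orderOf_pow_orderOf_div (by rw [h1]; omega) h2

namespace Axis
variable {α : Type} {w : FreeGroup α} (A : Axis w) {Q : Type} [Group Q] (π : FreeGroup α →* Q)

theorem V_order (r : ℕ) : A.V ((A.ℓ * r : ℕ) : ℤ) = w ^ r := by
  have := A.V_add_mul 0 r
  rw [zero_add, A.V0, mul_one, zpow_natCast] at this
  rw [← this]; congr 1; push_cast; ring

theorem aff_hol {R : Type} [CommRing R] (ζ : Rˣ) (wt : Q × α → ℤ) (f : Q × α → R) (q : Q) (n : ℕ) :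
    ∃ c : R, ∀ t, (wr π (fun x => aff (ζ ^ wt x) (f x)) (A.V n)).unop (q, t) =
      (q * π (A.V n),
        (ζ ^ (∑ i ∈ Finset.range n, sgn (A.U i) * wt (A.e π q i)) : Rˣ) * t + c) := by
  induction n with
  | zero => exact ⟨0, fun t => by simp [A.V0]⟩
  | succ n ih =>
    obtain ⟨c, hc⟩ := ih
    obtain ⟨d, hd⟩ := aff_sgn (ζ ^ wt (A.e π q n)) (f (A.e π q n)) (A.U n)
    refine ⟨((ζ ^ wt (A.e π q n)) ^ sgn (A.U n) : Rˣ) * c + d, fun t => ?_⟩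
    push_cast
    rw [A.wr_V_succ π _ q t _ n (hc t), hd, Finset.sum_range_succ, zpow_add,
      mul_comm (sgn _) (wt _), zpow_mul]
    push_cast
    congr 1
    ring

variable {A π}
theorem Sep.hol {R : Type} [CommRing R] (hA : A.Sep π) (D : Q × α → Equiv.Perm R)
    (h0 : D (A.e π 1 0) = aff 1 1)
    (h1 : ∀ i, A.e π 1 i ≠ A.e π 1 0 → D (A.e π 1 i) = 1)
    (hpos : 0 < orderOf (π w)) (k : ℕ) (t : R) :
    (wr π D ((w ^ orderOf (π w)) ^ k)).unop (1, t) = (1, t + k * (sgn (A.U 0) : ℤ)) := by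
  have step : ∀ n : ℕ, n < A.ℓ * orderOf (π w) → ∀ t,
      (wr π D (A.V (n + 1))).unop (1, t) = (1 * π (A.V (n + 1)), t + (sgn (A.U 0) : ℤ)) := by
    intro n
    induction n with
    | zero =>
      intro _ t
      have := A.wr_V_succ π D 1 t t 0 (by simp [A.V0])
      rw [h0, aff_one_sgn, mul_one] at this
      simpa using this
    | succ n ih =>
      intro hn t
      have := A.wr_V_succ π D 1 t _ (n + 1) (ih (by omega) t)
      rw [h1] at this
      · push_cast
        simpa using this
      · intro h
        have := Int.le_of_dvd (by omega) (hA.e_inj h)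
        omega
  have hL : 0 < A.ℓ * orderOf (π w) := Nat.mul_pos A.pos hpos
  have one : ∀ t, (wr π D (w ^ orderOf (π w))).unop (1, t) = (1, t + (sgn (A.U 0) : ℤ)) := by
    intro t
    have := step (A.ℓ * orderOf (π w) - 1) (by omega) t
    rw [show ((A.ℓ * orderOf (π w) - 1 : ℕ) : ℤ) + 1 = ((A.ℓ * orderOf (π w) : ℕ) : ℤ) by omega,
      A.V_order] at this
    rw [this, map_pow, pow_orderOf_eq_one, one_mul]
  induction k with
  | zero => simp
  | succ k ih =>
    rw [pow_succ, wr_mul, ih, one]; push_cast; congr 1; ring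

theorem sgn_unit (y : α × Bool) : sgn y = 1 ∨ sgn y = -1 := by
  unfold sgn; split_ifs <;> simp

theorem Sep.potency [Finite Q] (hA : A.Sep π) (N : ℕ) (hN : 0 < N) :
    ∃ (Q' : Type) (_ : Group Q') (_ : Finite Q') (φ : FreeGroup α →* Q'),
      orderOf (φ w) = orderOf (π w) * N := by
  classical
  have : NeZero N := ⟨hN.ne'⟩
  have hpos : 0 < orderOf (π w) := orderOf_pos _
  let f : Q × α → ZMod N := fun x => if x = A.e π 1 0 then 1 else 0
  let D : Q × α → Equiv.Perm (ZMod N) := fun x => aff ((1 : (ZMod N)ˣ) ^ ((fun _ => 0 : Q × α → ℤ) x)) (f x)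
  refine ⟨_, inferInstance, Finite.of_equiv _ MulOpposite.opEquiv, wr π D, ?_⟩
  apply Nat.dvd_antisymm
  · apply orderOf_dvd_of_pow_eq_one
    rw [pow_mul, ← map_pow, ← map_pow]
    apply MulOpposite.unop_injective
    ext1 ⟨q, t⟩
    obtain ⟨c, hc⟩ := A.aff_hol π 1 (fun _ => 0) f q (A.ℓ * orderOf (π w))
    rw [A.V_order, map_pow π, pow_orderOf_eq_one] at hc
    have : ∀ k : ℕ, (wr π D ((w ^ orderOf (π w)) ^ k)).unop (q, t) = (q, t + k * c) := by
      intro k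
      induction k with
      | zero => simp
      | succ k ih =>
        rw [pow_succ, wr_mul, ih, hc]; simp; ring
    rw [this]; simp
  · obtain ⟨k, hk⟩ : orderOf (π w) ∣ orderOf (wr π D w) := by
      apply orderOf_dvd_of_pow_eq_one
      have := wr_fst π D (w ^ orderOf (wr π D w)) (1, 0)
      rw [map_pow, pow_orderOf_eq_one] at this
      simpa using this.symm
    rw [hk]
    apply mul_dvd_mul_left
    have h := hA.hol D (by simp [D, f]) (by
      intro i hi; ext t; simp [D, f, hi, aff_apply]) hpos k 0
    rw [← pow_mul, ← hk, map_pow, pow_orderOf_eq_one] at h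
    have h2 : (k : ZMod N) * (sgn (A.U 0) : ℤ) = 0 := by simpa using h.symm
    rw [← ZMod.natCast_eq_zero_iff]
    rcases sgn_unit (A.U 0) with h3 | h3 <;> simpa [h3] using h2
end Axis

theorem exists_weights {ι E : Type} [Finite ι] (n : ℕ) (c : ι → ℕ → ℤ) (e : ι → ℕ → E) (S : Set E)
    (h : ∀ q, ∃ i < n, e q i ∉ S ∧ c q i ≠ 0 ∧ ∀ j < n, e q j = e q i → j = i) :
    ∃ wt : E → ℤ, (∀ x ∈ S, wt x = 0) ∧ ∀ q, ∑ i ∈ Finset.range n, c q i * wt (e q i) ≠ 0 := by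
  classical
  have := Fintype.ofFinite ι
  let P : ι → MvPolynomial E ℤ := fun q => ∑ i ∈ Finset.range n,
    if e q i ∈ S then 0 else MvPolynomial.C (c q i) * MvPolynomial.X (e q i)
  have hev : ∀ (x : E → ℤ) q, MvPolynomial.eval x (P q) =
      ∑ i ∈ Finset.range n, c q i * (if e q i ∈ S then 0 else x (e q i)) := by
    intro x q
    simp only [P, map_sum]
    refine Finset.sum_congr rfl fun i _ => ?_
    split_ifs <;> simp
  have hP : ∏ q, P q ≠ 0 := by
    rw [Finset.prod_ne_zero_iff]
    intro q _ hq
    obtain ⟨i, hi, hS, hc, hj⟩ := h q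
    have := hev (fun x => if x = e q i then 1 else 0) q
    rw [hq, map_zero, Finset.sum_eq_single i] at this
    · simp [hS] at this; exact hc this.symm
    · intro j hj1 hj2
      have : e q j ≠ e q i := fun h => hj2 (hj j (Finset.mem_range.mp hj1) h)
      simp [this]
    · intro h; exact absurd (Finset.mem_range.mpr hi) h
  obtain ⟨x, hx⟩ : ∃ x : E → ℤ, MvPolynomial.eval x (∏ q, P q) ≠ 0 := by
    by_contra! hcon
    exact hP (MvPolynomial.funext fun x => by rw [hcon x, map_zero])
  refine ⟨fun y => if y ∈ S then 0 else x y, fun y hy => by simp [hy], fun q => ?_⟩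
  rw [← hev]
  rw [map_prod, Finset.prod_ne_zero_iff] at hx
  exact hx q (Finset.mem_univ q)

theorem unbounded_core {α : Type} {u a : FreeGroup α} (A : Axis u) (B : Axis a)
    (hno : ∀ g, ¬ Commute a (g * u * g⁻¹)) :
    ∃ m > 0, ∀ N > 0, ∃ (Q' : Type) (_ : Group Q') (_ : Finite Q') (φ : FreeGroup α →* Q'),
      φ a ^ m = 1 ∧ φ u ^ N ≠ 1 := by
  classical
  obtain ⟨Q, _, _, π, hA, hB⟩ := exists_sep_two A B
  have hposu : 0 < orderOf (π u) := orderOf_pos _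
  have hposa : 0 < orderOf (π a) := orderOf_pos _
  set L := B.ℓ * orderOf (π a) with hL
  have hLpos : 0 < L := Nat.mul_pos B.pos hposa
  let S : Set (Q × α) := Set.range (A.e π 1)
  obtain ⟨wt, hwS, hw⟩ := exists_weights L (fun (_ : Q) i => sgn (B.U i))
    (fun q i => B.e π q i) S (by
      intro q
      by_contra! hcon
      have hall : ∀ i : ℕ, i < L → B.e π q i ∈ S := by
        intro i hi
        by_contra hS
        obtain ⟨j, hj, hj2, hj3⟩ := hcon i hi hS (by
          rcases Axis.sgn_unit (B.U i) with h | h <;> simp [h])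
        have := hB.e_inj hj2
        apply hj3
        have h4 := Int.eq_zero_of_abs_lt_dvd this (by rw [abs_lt]; omega)
        omega
      obtain ⟨g, hg⟩ := Axis.follow (A := A) B hA q (by
        intro i
        have h1 := Int.emod_nonneg i (b := (L : ℤ)) (by omega)
        have h2 := Int.emod_lt_of_pos i (b := (L : ℤ)) (by omega)
        have h3 : B.e π q i = B.e π q (i % L).toNat := by
          apply Axis.e_per
          rw [Int.toNat_of_nonneg h1]
          exact Int.dvd_self_sub_emod
        obtain ⟨j, hj⟩ := hall (i % L).toNat (by omega)
        exact ⟨j, by rw [h3, hj]⟩)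
      exact hno g hg)
  set W : Q → ℤ := fun q => ∑ i ∈ Finset.range L, sgn (B.U i) * wt (B.e π q i) with hW
  have := Fintype.ofFinite Q
  set M : ℕ := 1 + ∑ q, (W q).natAbs with hM
  have hWM : ∀ q, (W q).natAbs < M := by
    intro q
    have := Finset.single_le_sum (f := fun q => (W q).natAbs) (fun _ _ => Nat.zero_le _) (Finset.mem_univ q)
    omega
  refine ⟨orderOf (π a) * M, Nat.mul_pos hposa (by omega), fun N hN => ?_⟩
  obtain ⟨p, hp, hpN, hpM⟩ := Nat.exists_prime_gt_modEq_one (k := M) N (by omega)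
  have : Fact p.Prime := ⟨hp⟩
  obtain ⟨ζ, hζ⟩ := exists_order (p := p) (M := M) (by omega) hpM
  let f : Q × α → ZMod p := fun x => if x = A.e π 1 0 then 1 else 0
  let D : Q × α → Equiv.Perm (ZMod p) := fun x => aff (ζ ^ wt x) (f x)
  refine ⟨_, inferInstance, Finite.of_equiv _ MulOpposite.opEquiv, wr π D, ?_, ?_⟩
  · rw [pow_mul, ← map_pow, ← map_pow]
    apply MulOpposite.unop_injective
    ext1 ⟨q, t⟩
    obtain ⟨c, hc⟩ := B.aff_hol π ζ wt f q L
    rw [B.V_order, map_pow π, pow_orderOf_eq_one] at hc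
    change ∀ t, _ = (_, ((ζ ^ W q : (ZMod p)ˣ) : ZMod p) * t + c) at hc
    set lam : (ZMod p)ˣ := ζ ^ W q with hlam
    have hl1 : lam ≠ 1 := by
      intro h
      rw [hlam, ← orderOf_dvd_iff_zpow_eq_one, hζ] at h
      have h2 := Int.natAbs_dvd_natAbs.mpr h
      rw [Int.natAbs_natCast] at h2
      have := Nat.eq_zero_of_dvd_of_lt h2 (hWM q)
      exact hw q (Int.natAbs_eq_zero.mp this)
    have hlM : lam ^ M = 1 := by
      rw [hlam, ← zpow_natCast, ← zpow_mul, mul_comm, zpow_mul, zpow_natCast, ← hζ,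
        pow_orderOf_eq_one, one_zpow]
    have hl0 : (1 : ZMod p) - lam ≠ 0 := by
      rw [sub_ne_zero]; intro h; exact hl1 (Units.ext h.symm)
    have : ∀ k : ℕ, (wr π D ((a ^ orderOf (π a)) ^ k)).unop (q, t) =
        (q, ((lam ^ k : (ZMod p)ˣ) : ZMod p) * (t - c / (1 - lam)) + c / (1 - lam)) := by
      intro k
      induction k with
      | zero => simp
      | succ k ih =>
        rw [pow_succ, wr_mul, ih, hc]
        simp only [mul_one, Prod.mk.injEq, true_and]
        push_cast
        field_simp
        ring
    rw [this, hlM]; simp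
  · intro hN1
    have h := hA.hol D (by simp [D, f, hwS _ (Set.mem_range_self 0 : A.e π 1 0 ∈ S)])
      (by
        intro i hi; ext t
        simp [D, f, hi, aff_apply, hwS _ (Set.mem_range_self i : A.e π 1 i ∈ S)])
      hposu N 0
    rw [← pow_mul, mul_comm, pow_mul, map_pow, map_pow, hN1, one_pow] at h
    have h2 : (N : ZMod p) * (sgn (A.U 0) : ℤ) = 0 := by simpa using h.symm
    have h3 : (N : ZMod p) = 0 := by
      rcases Axis.sgn_unit (A.U 0) with h3 | h3 <;> simpa [h3] using h2
    rw [ZMod.natCast_eq_zero_iff] at h3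
    exact absurd (Nat.le_of_dvd hN h3) (by omega)

theorem orderOf_conj_eq {H : Type} [Group H] (g x : H) : orderOf (g * x * g⁻¹) = orderOf x := by
  rw [← MulAut.conj_apply]
  exact orderOf_injective (MulAut.conj g).toMonoidHom (MulAut.conj g).injective x

/-- Potency of a nontrivial element of a free group. -/
theorem exists_potency {α : Type} (a : FreeGroup α) (ha : a ≠ 1) :
    ∃ R > 0, ∀ N > 0, ∃ (Q : Type) (_ : Group Q) (_ : Finite Q) (φ : FreeGroup α →* Q),
      orderOf (φ a) = R * N := by
  obtain ⟨g, ⟨A⟩⟩ := exists_axis a ha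
  obtain ⟨Q, _, _, π, hA, -⟩ := exists_sep_two A A
  refine ⟨orderOf (π (g * a * g⁻¹)), orderOf_pos _, fun N hN => ?_⟩
  obtain ⟨Q', i1, i2, φ, h⟩ := hA.potency N hN
  refine ⟨Q', i1, i2, φ, ?_⟩
  rw [← h, map_mul, map_mul, map_inv, orderOf_conj_eq]

/-- Unboundedness of the order of `u` while the order of `a` stays bounded. -/
theorem exists_unbounded {α : Type} (a u : FreeGroup α) (ha : a ≠ 1) (hu : u ≠ 1)
    (hno : ∀ g, ¬ Commute a (g * u * g⁻¹)) :
    ∃ m > 0, ∀ N > 0, ∃ (Q' : Type) (_ : Group Q') (_ : Finite Q') (φ : FreeGroup α →* Q'),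
      φ a ^ m = 1 ∧ φ u ^ N ≠ 1 := by
  obtain ⟨g, ⟨A⟩⟩ := exists_axis u hu
  obtain ⟨h, ⟨B⟩⟩ := exists_axis a ha
  obtain ⟨m, hm, H⟩ := unbounded_core A B (by
    intro k hk
    apply hno (h⁻¹ * k * g)
    have := congrArg (fun z => h⁻¹ * z * h) hk.eq
    simp only [mul_assoc, mul_inv_rev, inv_inv, inv_mul_cancel_left, inv_mul_cancel, mul_one] at this
    show _ = _
    simp only [mul_assoc, mul_inv_rev, inv_inv]
    exact this)
  refine ⟨m, hm, fun N hN => ?_⟩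
  obtain ⟨Q', i1, i2, φ, h1, h2⟩ := H N hN
  refine ⟨Q', i1, i2, φ, ?_, ?_⟩
  · rw [map_mul, map_mul, map_inv, conj_pow] at h1
    exact conj_eq_one_iff.mp h1
  · rw [map_mul, map_mul, map_inv, conj_pow] at h2
    exact fun h => h2 (conj_eq_one_iff.mpr h)

theorem commute_zpowers {α : Type} (a w : FreeGroup α) (h : Commute a w) :
    ∃ z : FreeGroup α, a ∈ zpowers z ∧ w ∈ zpowers z := by
  classical
  let H : Subgroup (FreeGroup α) := closure {a, w}
  have hcomm : ∀ x y : H, x * y = y * x := by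
    have hc : IsMulCommutative (closure {a, w}) := by
      apply Subgroup.isMulCommutative_closure
      rintro x (rfl | rfl) y (rfl | rfl)
      · rfl
      · exact h
      · exact h.symm
      · rfl
    intro x y
    exact hc.is_comm.comm x y
  let e := IsFreeGroup.toFreeGroup H
  have hsub : Subsingleton (IsFreeGroup.Generators H) := by
    constructor
    intro x y
    by_contra hxy
    have h1 : FreeGroup.of x * FreeGroup.of y = FreeGroup.of y * FreeGroup.of x := by
      apply e.symm.injective
      rw [map_mul, map_mul, hcomm]
    have h2 := congrArg (FreeGroup.lift (fun t => if t = x then (Equiv.swap 0 1 : Equiv.Perm (Fin 3))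
      else Equiv.swap 1 2)) h1
    simp only [map_mul, FreeGroup.lift_apply_of, if_true, if_neg (Ne.symm hxy)] at h2
    revert h2
    decide
  have hcyc : ∃ z : H, ∀ x : H, x ∈ zpowers z := by
    have : IsCyclic (FreeGroup (IsFreeGroup.Generators H)) := by
      rcases isEmpty_or_nonempty (IsFreeGroup.Generators H) with hE | ⟨⟨x⟩⟩
      · infer_instance
      · have : Unique (IsFreeGroup.Generators H) := uniqueOfSubsingleton x
        infer_instance
    obtain ⟨z, hz⟩ := IsCyclic.exists_generator (α := FreeGroup (IsFreeGroup.Generators H))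
    refine ⟨e.symm z, fun x => ?_⟩
    obtain ⟨n, hn⟩ := hz (e x)
    refine ⟨n, ?_⟩
    simp only at hn ⊢
    rw [← map_zpow, hn, MulEquiv.symm_apply_apply]
  obtain ⟨z, hz⟩ := hcyc
  refine ⟨z, ?_, ?_⟩
  · obtain ⟨n, hn⟩ := hz ⟨a, subset_closure (by simp)⟩
    exact ⟨n, congrArg Subtype.val hn⟩
  · obtain ⟨n, hn⟩ := hz ⟨w, subset_closure (by simp)⟩
    exact ⟨n, congrArg Subtype.val hn⟩

theorem mem_zpowers_of_commute {α : Type} (a w : FreeGroup α) (ha : a ≠ 1)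
    (hpa : NotProperPower a) (h : Commute a w) : w ∈ zpowers a := by
  obtain ⟨z, ⟨k, hk⟩, hw⟩ := commute_zpowers a w h
  simp only at hk
  have h1 := hpa z k hk.symm
  have h0 : k ≠ 0 := by
    rintro rfl
    exact ha (by rw [← hk, zpow_zero])
  have : k = 1 ∨ k = -1 := by omega
  rcases this with rfl | rfl
  · rw [← hk, zpow_one]
    exact hw
  · rw [← hk, zpow_neg_one, zpowers_inv]
    exact hw

/-- One-factor lemma: bounded multiples of `m` as order of `a`, two different orders of `u`. -/
theorem factor_lemma {α : Type} (a u : FreeGroup α) (ha : a ≠ 1) (hpa : NotProperPower a)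
    (hu : ∀ g, g * u * g⁻¹ ∉ zpowers a) :
    ∃ M > 0, ∀ n > 0, M ∣ n → ∀ t : ℕ, ∃ (Q : Type) (_ : Group Q) (_ : Finite Q)
      (φ : FreeGroup α →* Q), orderOf (φ a) = n ∧ orderOf (φ u) ≠ t := by
  have hu1 : u ≠ 1 := by
    rintro rfl
    exact hu 1 (by simp)
  obtain ⟨R, hR, HR⟩ := exists_potency a ha
  obtain ⟨m, hm, Hm⟩ := exists_unbounded a u ha hu1
    (fun g hg => hu g (mem_zpowers_of_commute _ _ ha hpa hg))
  refine ⟨R * m, Nat.mul_pos hR hm, ?_⟩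
  rintro n hn ⟨c, rfl⟩ t
  have hc : 0 < m * c := by
    rw [mul_assoc] at hn
    exact Nat.pos_of_mul_pos_left hn
  obtain ⟨Q, _, _, φ, hφ⟩ := HR (m * c) hc
  by_cases ht : orderOf (φ u) = t
  · obtain ⟨Q', _, _, ψ, h1, h2⟩ := Hm (orderOf (φ u)) (orderOf_pos _)
    refine ⟨Q × Q', inferInstance, inferInstance, φ.prod ψ, ?_, ?_⟩
    · rw [MonoidHom.prod_apply, Prod.orderOf_mk, hφ, ← mul_assoc]
      apply Nat.lcm_eq_left
      exact (orderOf_dvd_of_pow_eq_one h1).trans ⟨R * c, by ring⟩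
    · rw [MonoidHom.prod_apply, Prod.orderOf_mk, ← ht]
      intro h3
      apply h2
      apply orderOf_dvd_iff_pow_eq_one.mp
      rw [← h3]
      conv_rhs => rw [h3]
      exact h3 ▸ Nat.dvd_lcm_right _ _
  · exact ⟨Q, inferInstance, inferInstance, φ, by rw [hφ, mul_assoc], ht⟩

/-- A finite group as a free `⟨x⟩`-set. -/
theorem exists_equiv_zpowers {A : Type} [Group A] (x : A) :
    ∃ (T : Type) (e : A ≃ zpowers x × T), ∀ p, e (x * p) =
      (⟨x, mem_zpowers x⟩ * (e p).1, (e p).2) := by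
  let T := Quotient (QuotientGroup.rightRel (zpowers x))
  let mk : A → T := fun p => Quotient.mk _ p
  have hmk : ∀ h ∈ zpowers x, ∀ p, mk (h * p) = mk p := by
    intro h hh p
    apply Quotient.sound
    apply QuotientGroup.rightRel_apply.mpr
    simpa using (zpowers x).inv_mem hh
  have hout : ∀ p, p * (mk p).out⁻¹ ∈ zpowers x := by
    intro p
    exact QuotientGroup.rightRel_apply.mp (Quotient.mk_out (s := QuotientGroup.rightRel (zpowers x)) p)
  have hmo : ∀ t : T, mk t.out = t := fun t => Quotient.out_eq t
  refine ⟨T, ⟨fun p => (⟨p * (mk p).out⁻¹, hout p⟩, mk p), fun q => q.1 * q.2.out, ?_, ?_⟩, ?_⟩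
  · intro p
    simp
  · rintro ⟨⟨h, hh⟩, t⟩
    have : mk (h * t.out) = t := by rw [hmk h hh, hmo]
    simp [this]
  · intro p
    have := hmk x (mem_zpowers x) p
    simp [this, mul_assoc]

theorem exists_intertwine {A B : Type} [Group A] [Group B] [Finite A] [Finite B] (x : A) (y : B)
    (h : orderOf x = orderOf y) :
    ∃ σ : A × B ≃ A × B, ∀ p q, σ (x * p, q) = ((σ (p, q)).1, y * (σ (p, q)).2) := by
  obtain ⟨T, e, he⟩ := exists_equiv_zpowers x
  obtain ⟨S, f, hf⟩ := exists_equiv_zpowers y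
  have hT : Finite T := Finite.of_surjective (fun p => (e p).2) (by
    intro t
    exact ⟨e.symm (1, t), by simp⟩)
  have hS : Finite S := Finite.of_surjective (fun p => (f p).2) (by
    intro t
    exact ⟨f.symm (1, t), by simp⟩)
  have c1 : Nat.card A = orderOf x * Nat.card T := by
    rw [Nat.card_congr e, Nat.card_prod, Nat.card_zpowers]
  have c2 : Nat.card B = orderOf y * Nat.card S := by
    rw [Nat.card_congr f, Nat.card_prod, Nat.card_zpowers]
  have c3 : Nat.card (T × B) = Nat.card (A × S) := by
    rw [Nat.card_prod, Nat.card_prod, c1, c2, h]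
    ring
  have := Fintype.ofFinite (T × B)
  have := Fintype.ofFinite (A × S)
  rw [Nat.card_eq_fintype_card, Nat.card_eq_fintype_card] at c3
  let τ : T × B ≃ A × S := Fintype.equivOfCardEq c3
  let z : zpowers x ≃* zpowers y :=
    mulEquivOfOrderOfEq (g := ⟨x, mem_zpowers x⟩) (g' := ⟨y, mem_zpowers y⟩)
      (by
        rintro ⟨_, n, rfl⟩
        exact ⟨n, Subtype.ext (by simp)⟩)
      (by
        rintro ⟨_, n, rfl⟩
        exact ⟨n, Subtype.ext (by simp)⟩)
      (by rw [← Subgroup.orderOf_coe, ← Subgroup.orderOf_coe, h])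
  have hz : ∀ k : zpowers x, z (⟨x, mem_zpowers x⟩ * k) = ⟨y, mem_zpowers y⟩ * z k := by
    intro k
    rw [map_mul]
    simp only [z, mulEquivOfOrderOfEq_apply_gen]
  -- A × B ≃ (⟨x⟩ × T) × B ≃ ⟨x⟩ × (T × B) ≃ ⟨y⟩ × (A × S) ≃ A × (⟨y⟩ × S) ≃ A × B
  let σ1 : A × B ≃ zpowers x × (T × B) := (e.prodCongr (Equiv.refl B)).trans (Equiv.prodAssoc _ _ _)
  let σ2 : zpowers x × (T × B) ≃ zpowers y × (A × S) := z.toEquiv.prodCongr τ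
  let σ3 : zpowers y × (A × S) ≃ A × B :=
    ⟨fun r => (r.2.1, f.symm (r.1, r.2.2)), fun r => ((f r.2).1, (r.1, (f r.2).2)),
      fun r => by simp, fun r => by simp⟩
  have hf' : ∀ k s, f.symm (⟨y, mem_zpowers y⟩ * k, s) = y * f.symm (k, s) := by
    intro k s
    apply f.injective
    rw [hf]
    simp
  refine ⟨(σ1.trans σ2).trans σ3, fun p q => ?_⟩
  simp [σ1, σ2, σ3, he, hz, hf']

def leftPerm (A B : Type) [Group A] : A →* Equiv.Perm (A × B) where
  toFun g := (Equiv.mulLeft g).prodCongr (Equiv.refl B)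
  map_one' := by ext <;> simp
  map_mul' g h := by ext <;> simp [mul_assoc]

def rightPerm (A B : Type) [Group B] : B →* Equiv.Perm (A × B) where
  toFun g := (Equiv.refl A).prodCongr (Equiv.mulLeft g)
  map_one' := by ext <;> simp
  map_mul' g h := by ext <;> simp [mul_assoc]

theorem leftPerm_injective (A B : Type) [Group A] [Nonempty B] :
    Function.Injective (leftPerm A B) := by
  intro g h hgh
  obtain ⟨b⟩ := ‹Nonempty B›
  have := congrArg (fun s : Equiv.Perm (A × B) => (s (1, b)).1) hgh
  simpa [leftPerm] using this

theorem rightPerm_injective (A B : Type) [Group B] [Nonempty A] :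
    Function.Injective (rightPerm A B) := by
  intro g h hgh
  obtain ⟨b⟩ := ‹Nonempty A›
  have := congrArg (fun s : Equiv.Perm (A × B) => (s (b, 1)).2) hgh
  simpa [rightPerm] using this

def pairMaps {α β P : Type} [Group P] (f : FreeGroup α →* P) (g : FreeGroup β →* P) :
    ∀ i : Bool, fam α β i →* P
  | true => f
  | false => g

theorem core_lemma {α β : Type} (a : FreeGroup α) (b : FreeGroup β) (u : FreeGroup α)
    (v : FreeGroup β) {A B : Type} [Group A] [Group B] [Finite A] [Finite B]
    (f : FreeGroup α →* A) (g : FreeGroup β →* B) (h : orderOf (f a) = orderOf (g b))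
    (huv : orderOf (f u) ≠ orderOf (g v)) :
    ∃ (Q : Type) (_ : Group Q) (_ : Finite Q)
      (φ : PushoutI (amalMaps a b) →* Q),
      Function.Surjective φ ∧
      orderOf (φ (PushoutI.of (φ := amalMaps a b) true u)) ≠
        orderOf (φ (PushoutI.of (φ := amalMaps a b) false v)) := by
  obtain ⟨σ, hσ⟩ := exists_intertwine (f a) (g b) h
  let f' : FreeGroup α →* Equiv.Perm (A × B) :=
    (MulAut.conj (σ : Equiv.Perm (A × B))).toMonoidHom.comp ((leftPerm A B).comp f)
  let g' : FreeGroup β →* Equiv.Perm (A × B) := (rightPerm A B).comp g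
  have hab : f' a = g' b := by
    show (σ : Equiv.Perm (A × B)) * leftPerm A B (f a) * (σ : Equiv.Perm (A × B))⁻¹ =
      rightPerm A B (g b)
    rw [mul_inv_eq_iff_eq_mul]
    apply Equiv.ext
    rintro ⟨p, q⟩
    exact hσ p q
  have hfu : orderOf (f' u) = orderOf (f u) := by
    show orderOf ((σ : Equiv.Perm (A × B)) * leftPerm A B (f u) * (σ : Equiv.Perm (A × B))⁻¹) = _
    rw [orderOf_conj_eq]
    exact orderOf_injective _ (leftPerm_injective A B) _
  have hgv : orderOf (g' v) = orderOf (g v) :=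
    orderOf_injective _ (rightPerm_injective A B) _
  let Φ : PushoutI (amalMaps a b) →* Equiv.Perm (A × B) :=
    PushoutI.lift (pairMaps f' g') (FreeGroup.lift fun _ => f' a) (by
      rintro (_ | _)
      · apply FreeGroup.ext_hom
        intro t
        show g' (FreeGroup.lift (fun _ => b) (FreeGroup.of t)) = _
        simp [hab]
      · apply FreeGroup.ext_hom
        intro t
        show f' (FreeGroup.lift (fun _ => a) (FreeGroup.of t)) = _
        simp)
  refine ⟨Φ.range, inferInstance, inferInstance, Φ.rangeRestrict, Φ.rangeRestrict_surjective, ?_⟩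
  have e1 : Φ (PushoutI.of (φ := amalMaps a b) true u) = f' u := PushoutI.lift_of _ _ _ _
  have e2 : Φ (PushoutI.of (φ := amalMaps a b) false v) = g' v := PushoutI.lift_of _ _ _ _
  rw [← Subgroup.orderOf_coe, ← Subgroup.orderOf_coe, MonoidHom.coe_rangeRestrict,
    MonoidHom.coe_rangeRestrict, e1, e2, hfu, hgv]
  exact huv

theorem of_eq_of {α β : Type} (a : FreeGroup α) (b : FreeGroup β) :
    PushoutI.of (φ := amalMaps a b) true a = PushoutI.of (φ := amalMaps a b) false b := by
  have h1 := PushoutI.of_apply_eq_base (amalMaps a b) true (FreeGroup.of ())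
  have h2 := PushoutI.of_apply_eq_base (amalMaps a b) false (FreeGroup.of ())
  have e1 : amalMaps a b true (FreeGroup.of ()) = a := FreeGroup.lift_apply_of
  have e2 : amalMaps a b false (FreeGroup.of ()) = b := FreeGroup.lift_apply_of
  rw [e1] at h1
  rw [e2] at h2
  rw [h1, h2]

theorem orderOf_zpow_div {H : Type} [Group H] (x : H) (k : ℤ) (hk : k ≠ 0)
    (h : k.natAbs ∣ orderOf x) : orderOf (x ^ k) = orderOf x / k.natAbs := by
  have h0 : k.natAbs ≠ 0 := by omega
  rcases Int.natAbs_eq k with hk' | hk'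
  · conv_lhs => rw [hk']
    rw [zpow_natCast, orderOf_pow_of_dvd h0 h]
  · conv_lhs => rw [hk']
    rw [zpow_neg, orderOf_inv, zpow_natCast, orderOf_pow_of_dvd h0 h]

theorem conj_or_conj_inv {H K P : Type} [Group H] [Group K] [Group P] (i : H →* P) (j : K →* P)
    (a u g : H) (b v h : K) (k l : ℤ) (hab : i a = j b) (hk : a ^ k = g * u * g⁻¹)
    (hl : b ^ l = h * v * h⁻¹) (hkl : k.natAbs = l.natAbs) :
    IsConj (i u) (j v) ∨ IsConj (i u) (j v)⁻¹ := by
  have c1 : IsConj (i u) (i a ^ k) := by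
    rw [isConj_iff]
    refine ⟨i g, ?_⟩
    rw [← map_zpow, hk, map_mul, map_mul, map_inv]
  have c2 : IsConj (j b ^ l) (j v) := by
    apply IsConj.symm
    rw [isConj_iff]
    refine ⟨j h, ?_⟩
    rw [← map_zpow, hl, map_mul, map_mul, map_inv]
  rcases Int.natAbs_eq_natAbs_iff.mp hkl with rfl | rfl
  · left
    rw [hab] at c1
    exact c1.trans c2
  · right
    have c3 : IsConj (j b ^ (-l)) (j v)⁻¹ := by
      obtain ⟨c, hc⟩ := isConj_iff.mp c2
      rw [isConj_iff]
      refine ⟨c, ?_⟩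
      rw [← hc, zpow_neg]
      group
    rw [hab] at c1
    exact c1.trans c3

def ofLeft {α β : Type} (a : FreeGroup α) (b : FreeGroup β) :
    FreeGroup α →* PushoutI (amalMaps a b) := PushoutI.of (φ := amalMaps a b) true

def ofRight {α β : Type} (a : FreeGroup α) (b : FreeGroup β) :
    FreeGroup β →* PushoutI (amalMaps a b) := PushoutI.of (φ := amalMaps a b) false

theorem stmt19 {α β : Type} (a : FreeGroup α) (b : FreeGroup β)
    (ha : a ≠ 1) (hb : b ≠ 1) (hpa : NotProperPower a) (hpb : NotProperPower b)
    (u : FreeGroup α) (v : FreeGroup β)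
    (hu : u ∉ zpowers a) (hv : v ∉ zpowers b)
    (h1 : ¬ IsConj (PushoutI.of (φ := amalMaps a b) true u)
            (PushoutI.of (φ := amalMaps a b) false v))
    (h2 : ¬ IsConj (PushoutI.of (φ := amalMaps a b) true u)
            (PushoutI.of (φ := amalMaps a b) false v)⁻¹) :
    ∃ (Q : Type) (_ : Group Q) (_ : Finite Q)
      (φ : PushoutI (amalMaps a b) →* Q),
      Function.Surjective φ ∧
      orderOf (φ (PushoutI.of (φ := amalMaps a b) true u)) ≠
        orderOf (φ (PushoutI.of (φ := amalMaps a b) false v)) := by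
  by_cases hU : ∀ g, g * u * g⁻¹ ∉ zpowers a
  · obtain ⟨M, hM, HM⟩ := factor_lemma a u ha hpa hU
    obtain ⟨R, hR, HR⟩ := exists_potency b hb
    obtain ⟨B, _, _, ψ, hψ⟩ := HR M hM
    obtain ⟨A, _, _, φ, hφ, hne⟩ := HM (R * M) (Nat.mul_pos hR hM) ⟨R, by ring⟩ (orderOf (ψ v))
    exact core_lemma a b u v φ ψ (by rw [hφ, hψ]) hne
  by_cases hV : ∀ g, g * v * g⁻¹ ∉ zpowers b
  · obtain ⟨M, hM, HM⟩ := factor_lemma b v hb hpb hV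
    obtain ⟨R, hR, HR⟩ := exists_potency a ha
    obtain ⟨A, _, _, φ, hφ⟩ := HR M hM
    obtain ⟨B, _, _, ψ, hψ, hne⟩ := HM (R * M) (Nat.mul_pos hR hM) ⟨R, by ring⟩ (orderOf (φ u))
    exact core_lemma a b u v φ ψ (by rw [hφ, hψ]) hne.symm
  push Not at hU hV
  obtain ⟨g, k, hk⟩ := hU
  obtain ⟨h, l, hl⟩ := hV
  simp only at hk hl
  have hk0 : k ≠ 0 := by
    rintro rfl
    rw [zpow_zero, eq_comm, conj_eq_one_iff] at hk
    exact hu (hk ▸ one_mem _)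
  have hl0 : l ≠ 0 := by
    rintro rfl
    rw [zpow_zero, eq_comm, conj_eq_one_iff] at hl
    exact hv (hl ▸ one_mem _)
  have hkl : k.natAbs ≠ l.natAbs := by
    intro hkl
    rcases conj_or_conj_inv (ofLeft a b) (ofRight a b) a u g b v h k l (of_eq_of a b) hk hl hkl
      with hc | hc
    · exact h1 hc
    · exact h2 hc
  have hkpos : 0 < k.natAbs := by omega
  have hlpos : 0 < l.natAbs := by omega
  have hklpos := Nat.mul_pos hkpos hlpos
  obtain ⟨R, hR, HR⟩ := exists_potency a ha
  obtain ⟨S, hS, HS⟩ := exists_potency b hb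
  obtain ⟨A, _, _, φ, hφ⟩ := HR (S * (k.natAbs * l.natAbs)) (Nat.mul_pos hS hklpos)
  obtain ⟨B, _, _, ψ, hψ⟩ := HS (R * (k.natAbs * l.natAbs)) (Nat.mul_pos hR hklpos)
  have ou : orderOf (φ u) = R * S * l.natAbs := by
    rw [← orderOf_conj_eq (φ g), ← map_inv, ← map_mul, ← map_mul, ← hk, map_zpow,
      orderOf_zpow_div _ k hk0 (hφ ▸ ⟨R * S * l.natAbs, by ring⟩), hφ]
    apply Nat.div_eq_of_eq_mul_left hkpos
    ring
  have ov : orderOf (ψ v) = R * S * k.natAbs := by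
    rw [← orderOf_conj_eq (ψ h), ← map_inv, ← map_mul, ← map_mul, ← hl, map_zpow,
      orderOf_zpow_div _ l hl0 (hψ ▸ ⟨R * S * k.natAbs, by ring⟩), hψ]
    apply Nat.div_eq_of_eq_mul_left hlpos
    ring
  refine core_lemma a b u v φ ψ (by rw [hφ, hψ]; ring) ?_
  rw [ou, ov]
  intro hc
  exact hkl (Nat.eq_of_mul_eq_mul_left (Nat.mul_pos hR hS) hc).symm
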